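/- Let B be a nonempty compact metric space, f : B → B a continuous minimal map, and F : B × [0,1] → B × [0,1] a continuous map of the form F(b, y) = (f(b), g(b, y)) with g : B × [0,1] → [0,1] continuous. Then every minimal set of F is nowhere dense in B × [0,1]. -/

import Mathlib

open Set Topology unitInterval

/-!
A backward orbit in a compact minimal set `M` is dense in `M`, so any nonempty `A ⊆ M` with
`A ⊆ F(A)` is dense in `M`. In particular no nonempty relatively open `W ⊆ M` satisfies
`F(M \ W) = M`.

Let `F` be a skew product with minimal set `M ⊆ B × Y`. Restricting to the projection of `M`, we may
assume that the base map is minimal. If `J` is an interval such that `{a'} × J ⊆ M` for all `a'`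
near `a`, then the fibre map over `a` has no strict interior extremum on `J`: the values on one
slope of a peak are also taken on the other slope, so the points of the first slope could be deleted
from `M`. Hence over a residual set of base points the fibre maps are monotone on each interval
contained in the fibre of `M`, and an endpoint of a component of a fibre is the image of an endpoint
of a component of the preceding fibre. The endpoints lying over a backward invariant residual set
thus form a set `E ⊆ F(E)`, dense in `M`. But no endpoint lies in an open box contained in `M`.
-/

open Filter Function TopologicalSpace

/-- A compact minimal set of `F`. No compactness is assumed of the ambient space, so the set itself
is required to be compact. Minimality is the density of all forward orbits. -/
structure IsMinimalSet {X : Type*} [TopologicalSpace X] (F : X → X) (M : Set X) : Prop where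
  nonempty : M.Nonempty
  isCompact : IsCompact M
  mapsTo : MapsTo F M M
  subset_closure_orbit : ∀ p ∈ M, M ⊆ closure (range fun n => F^[n] p)

theorem image_range_iterate {X Y : Type*} {F : X → X} {G : Y → Y} {π : X → Y} (h : Semiconj π F G)
    (p : X) : (π '' range fun n => F^[n] p) = range fun n => G^[n] (π p) := by
  simp only [← range_comp, comp_def, (h.iterate_right _).eq]

namespace IsMinimalSet

variable {X Y : Type*} [TopologicalSpace X] [TopologicalSpace Y] {F : X → X} {G : Y → Y}
  {M : Set X} {N : Set Y} {π : X → Y}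

theorem image (hM : IsMinimalSet F M) (hπ : Continuous π) (h : Semiconj π F G) :
    IsMinimalSet G (π '' M) where
  nonempty := hM.nonempty.image π
  isCompact := hM.isCompact.image hπ
  mapsTo := by
    rintro _ ⟨p, hp, rfl⟩
    exact ⟨F p, hM.mapsTo hp, h p⟩
  subset_closure_orbit := by
    rintro _ ⟨p, hp, rfl⟩
    rw [← image_range_iterate h p]
    exact (image_mono (hM.subset_closure_orbit p hp)).trans (image_closure_subset_closure_image hπ)

theorem preimage (hN : IsMinimalSet G N) (hπ : IsInducing π) (h : Semiconj π F G)
    (hNπ : N ⊆ range π) : IsMinimalSet F (π ⁻¹' N) where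
  nonempty := hN.nonempty.preimage' hNπ
  isCompact := hπ.isCompact_preimage' hN.isCompact hNπ
  mapsTo p hp := by
    rw [mem_preimage, h p]
    exact hN.mapsTo hp
  subset_closure_orbit p hp := by
    rw [hπ.closure_eq_preimage_closure_image, image_range_iterate h p]
    exact preimage_mono (hN.subset_closure_orbit _ hp)

theorem subset_closure_of_backward_orbit (hM : IsMinimalSet F M) (hF : Continuous F)
    {x : ℕ → X} (hxM : ∀ n, x n ∈ M) (hx : ∀ n, F (x (n + 1)) = x n) :
    M ⊆ closure (range x) := by
  have hiter : ∀ k n, F^[k] (x (n + k)) = x n := by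
    intro k
    induction k with
    | zero => exact fun n => rfl
    | succ k ih => intro n; rw [iterate_succ_apply, ← add_assoc, hx, ih]
  obtain ⟨z, hzM, hz⟩ := hM.isCompact.exists_mapClusterPt (f := atTop) (u := x)
    (tendsto_principal.2 (Eventually.of_forall hxM))
  refine (hM.subset_closure_orbit z hzM).trans (closure_minimal ?_ isClosed_closure)
  rintro _ ⟨k, rfl⟩
  have hk : MapClusterPt (F^[k] z) atTop (F^[k] ∘ x) :=
    hz.continuousAt_comp (hF.iterate k).continuousAt
  refine mem_closure_iff_nhds.2 fun s hs => ?_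
  obtain ⟨n, hn, hkn⟩ := ((hk.frequently hs).and_eventually (eventually_ge_atTop k)).exists
  refine ⟨_, hn, n - k, ?_⟩
  rw [comp_apply, ← hiter k (n - k), Nat.sub_add_cancel hkn]

theorem subset_closure_of_subset_image (hM : IsMinimalSet F M) (hF : Continuous F) {A : Set X}
    (hAM : A ⊆ M) (hA : A.Nonempty) (hAF : A ⊆ F '' A) : M ⊆ closure A := by
  choose φ hφA hφ using hAF
  obtain ⟨a, ha⟩ := hA
  let x : ℕ → A := fun n => (fun p : A => (⟨φ p.2, hφA p.2⟩ : A))^[n] ⟨a, ha⟩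
  have hx : ∀ n, F (x (n + 1)) = x n := by
    intro n
    simp only [x, iterate_succ_apply']
    exact hφ _
  exact (hM.subset_closure_of_backward_orbit hF (fun n => hAM (x n).2) hx).trans
    (closure_mono (range_subset_iff.2 fun n => (x n).2))

theorem disjoint_of_subset_image_diff (hM : IsMinimalSet F M) (hF : Continuous F) {W : Set X}
    (hW : IsOpen W) (h : M ⊆ F '' (M \ W)) : Disjoint M W := by
  have hne : (M \ W).Nonempty := (hM.nonempty.mono h).of_image
  have hdense := hM.subset_closure_of_subset_image hF sdiff_subset hne (sdiff_subset.trans h)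
  exact disjoint_left.2 fun p hp =>
    closure_minimal (fun q hq => hq.2) hW.isClosed_compl (hdense hp)

theorem subset_image [T2Space X] (hM : IsMinimalSet F M) (hF : Continuous F) : M ⊆ F '' M := by
  intro p hp
  have hmaps : MapsTo F (F '' M) (F '' M) :=
    mapsTo_image_iff.2 fun q hq => mem_image_of_mem F (hM.mapsTo hq)
  refine closure_minimal ?_ (hM.isCompact.image hF).isClosed
    (hM.subset_closure_orbit _ (hM.mapsTo hp) hp)
  exact range_subset_iff.2 fun n => hmaps.iterate n (mem_image_of_mem F hp)

end IsMinimalSet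

section Residual

variable {X : Type*} [TopologicalSpace X]

theorem eventually_residual_mem_nhds_of_isClosed {C : Set X} (hC : IsClosed C) :
    ∀ᶠ a in residual X, a ∈ C → C ∈ 𝓝 a := by
  have hdense : Dense (frontier C)ᶜ := interior_eq_empty_iff_dense_compl.1 (interior_frontier hC)
  filter_upwards [residual_of_dense_open isClosed_frontier.isOpen_compl hdense] with a ha haC
  exact mem_interior_iff_mem_nhds.1 (by_contra fun h => ha ⟨subset_closure haC, h⟩)

variable [T2Space X] {f : X → X}

namespace IsMinimalSet

theorem dense_kernImage (hf : IsMinimalSet f univ) (hfc : Continuous f) {s : Set X}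
    (hso : IsOpen s) (hsd : Dense s) : Dense (kernImage f s) := by
  refine dense_iff_inter_open.2 fun V hV ⟨v, hv⟩ => ?_
  by_contra hempty
  have hsurj := hf.subset_image hfc
  have hcover : univ ⊆ f '' (univ \ (s ∩ f ⁻¹' V)) := by
    intro b _
    by_cases hb : b ∈ V
    · have hbs : ∃ a, f a = b ∧ a ∉ s := by
        by_contra! h
        exact hempty ⟨b, hb, h⟩
      obtain ⟨a, rfl, ha⟩ := hbs
      exact ⟨a, ⟨mem_univ a, fun h => ha h.1⟩, rfl⟩
    · obtain ⟨a, -, rfl⟩ := hsurj (mem_univ b)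
      exact ⟨a, ⟨mem_univ a, fun h => hb h.2⟩, rfl⟩
  obtain ⟨u, -, rfl⟩ := hsurj (mem_univ v)
  obtain ⟨w, hwV, hws⟩ := hsd.inter_open_nonempty _ (hV.preimage hfc) ⟨u, hv⟩
  exact disjoint_left.1
    (hf.disjoint_of_subset_image_diff hfc (hso.inter (hV.preimage hfc)) hcover)
    (mem_univ w) ⟨hws, hwV⟩

theorem kernImage_mem_residual (hf : IsMinimalSet f univ) (hfc : Continuous f) {s : Set X}
    (hs : s ∈ residual X) : kernImage f s ∈ residual X := by
  have : CompactSpace X := ⟨hf.isCompact⟩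
  have hle : comap f (residual X) ≤ residual X := by
    refine le_countableGenerate_iff_of_countableInterFilter.2 fun s hs => ?_
    exact mem_comap''.2 (residual_of_dense_open
      (isClosedMap_iff_kernImage.1 hfc.isClosedMap hs.1) (hf.dense_kernImage hfc hs.1 hs.2))
  exact mem_comap''.1 (hle hs)

theorem exists_residual_subset_preimage_subset (hf : IsMinimalSet f univ) (hfc : Continuous f)
    {s : Set X} (hs : s ∈ residual X) : ∃ t ∈ residual X, t ⊆ s ∧ f ⁻¹' t ⊆ t := by
  have hiter : ∀ n, (kernImage f)^[n] s ∈ residual X := by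
    intro n
    induction n with
    | zero => exact hs
    | succ n ih =>
      rw [iterate_succ_apply']
      exact hf.kernImage_mem_residual hfc ih
  refine ⟨⋂ n, (kernImage f)^[n] s, countable_iInter_mem.2 hiter, iInter_subset _ 0,
    fun a ha => mem_iInter.2 fun n => ?_⟩
  have hfa := mem_iInter.1 ha (n + 1)
  rw [iterate_succ_apply'] at hfa
  exact hfa rfl

end IsMinimalSet

end Residual

section NoPeaks

variable {B Y Z : Type*} [TopologicalSpace B]

theorem eventually_residual_eventually_Icc_subset [Preorder Y] [TopologicalSpace Y]
    {M : Set (B × Y)} (hM : IsClosed M) {D : Set Y} (hD : D.Countable) :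
    ∀ᶠ a in residual B, ∀ x ∈ D, ∀ z ∈ D, Icc x z ⊆ Prod.mk a ⁻¹' M →
      ∀ᶠ a' in 𝓝 a, Icc x z ⊆ Prod.mk a' ⁻¹' M := by
  refine (eventually_countable_ball hD).2 fun x _ => (eventually_countable_ball hD).2 fun z _ => ?_
  refine eventually_residual_mem_nhds_of_isClosed (C := {a | Icc x z ⊆ Prod.mk a ⁻¹' M}) ?_
  have hInter : {a | Icc x z ⊆ Prod.mk a ⁻¹' M} = ⋂ t ∈ Icc x z, (fun a => (a, t)) ⁻¹' M := by
    ext a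
    simp [subset_def]
  rw [hInter]
  exact isClosed_biInter fun t _ => hM.preimage (by fun_prop)

theorem exists_mem_Ioo_map_lt [LinearOrder Y] [TopologicalSpace Y] [OrderTopology Y]
    [DenselyOrdered Y] [LinearOrder Z] [TopologicalSpace Z] [OrderClosedTopology Z]
    {D : Set Y} (hD : Dense D) {u : Y → Z} (hu : Continuous u) {x y : Y} {c : Z} (hxy : x < y)
    (hxc : u x < c) : ∃ t ∈ D, t ∈ Ioo x y ∧ u t < c := by
  have hopen : IsOpen {t | u t < c} := isOpen_lt hu continuous_const
  have hne : (𝓝[>] x).NeBot := nhdsGT_neBot_of_exists_gt ⟨y, hxy⟩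
  obtain ⟨t, ht, htD⟩ := hD.inter_open_nonempty _ (isOpen_Ioo.inter hopen)
    (nonempty_of_mem (inter_mem (Ioo_mem_nhdsGT hxy) (mem_nhdsWithin_of_mem_nhds
      (hopen.mem_nhds hxc))))
  exact ⟨t, htD, ht⟩

variable [T2Space B] [ConditionallyCompleteLinearOrder Y] [TopologicalSpace Y] [OrderTopology Y]
  [DenselyOrdered Y] [LinearOrder Z] [TopologicalSpace Z] [OrderClosedTopology Z]
  [DenselyOrdered Z] {F : B × Y → B × Y} {M : Set (B × Y)} {h : B × Y → Z} {a : B} {x y z : Y}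

namespace IsMinimalSet

theorem le_of_lt_of_eventually_Icc_subset (hM : IsMinimalSet F M) (hF : Continuous F)
    (hh : Continuous h) (hFh : ∀ a t t', h (a, t) = h (a, t') → F (a, t) = F (a, t'))
    (hxy : x < y) (hyz : y < z) (hxz : ∀ᶠ a' in 𝓝 a, Icc x z ⊆ Prod.mk a' ⁻¹' M)
    (hlt : h (a, x) < h (a, y)) : h (a, y) ≤ h (a, z) := by
  by_contra! hzy
  obtain ⟨V, hVM, hV, haV⟩ := eventually_nhds_iff.1 hxz
  -- Points of `W` lie on the ascending slope; their values recur on the descending slope over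
  -- `[y, z]`, so deleting `W` from `M` does not affect the image.
  let W : Set (B × Y) :=
    {p | p.1 ∈ V ∧ (x < p.2 ∧ p.2 < y) ∧ h (p.1, z) < h p ∧ h p < h (p.1, y)}
  have hW : IsOpen W := by
    refine (hV.preimage continuous_fst).and (((isOpen_lt ?_ ?_).and (isOpen_lt ?_ ?_)).and
      ((isOpen_lt ?_ ?_).and (isOpen_lt ?_ ?_))) <;> fun_prop
  have hWM : W ⊆ M := fun p ⟨hp, hp2, _⟩ => hVM p.1 hp ⟨hp2.1.le, (hp2.2.trans hyz).le⟩
  obtain ⟨w, hw⟩ : W.Nonempty := by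
    obtain ⟨c, hc, hcy⟩ := exists_between (max_lt hlt hzy)
    obtain ⟨t, ht, rfl⟩ := intermediate_value_Ioo hxy.le
      (f := fun t => h (a, t)) (by fun_prop) ⟨(le_max_left _ _).trans_lt hc, hcy⟩
    exact ⟨(a, t), haV, ht, (le_max_right _ _).trans_lt hc, hcy⟩
  have hcover : M ⊆ F '' (M \ W) := by
    intro p hp
    obtain ⟨⟨b, s⟩, hq, rfl⟩ := hM.subset_image hF hp
    by_cases hqW : (b, s) ∈ W
    · obtain ⟨hbV, -, hzs, hsy⟩ := hqW
      obtain ⟨t, ht, hts⟩ := intermediate_value_Icc' hyz.le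
        (f := fun t => h (b, t)) (by fun_prop) ⟨hzs.le, hsy.le⟩
      exact ⟨(b, t), ⟨hVM b hbV ⟨hxy.le.trans ht.1, ht.2⟩, fun hW => hW.2.1.2.not_ge ht.1⟩,
        hFh _ _ _ hts⟩
    · exact ⟨(b, s), ⟨hq, hqW⟩, rfl⟩
  exact disjoint_left.1 (hM.disjoint_of_subset_image_diff hF hW hcover) (hWM hw) hw

theorem le_of_lt_of_Icc_subset (hM : IsMinimalSet F M) (hF : Continuous F)
    (hh : Continuous h) (hFh : ∀ a t t', h (a, t) = h (a, t') → F (a, t) = F (a, t'))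
    {D : Set Y} (hD : Dense D)
    (ha : ∀ x ∈ D, ∀ z ∈ D, Icc x z ⊆ Prod.mk a ⁻¹' M →
      ∀ᶠ a' in 𝓝 a, Icc x z ⊆ Prod.mk a' ⁻¹' M)
    (hxy : x < y) (hyz : y < z) (hxz : Icc x z ⊆ Prod.mk a ⁻¹' M)
    (hlt : h (a, x) < h (a, y)) : h (a, y) ≤ h (a, z) := by
  by_contra! hzy
  have hu : Continuous fun t => h (a, t) := by fun_prop
  obtain ⟨x', hx'D, ⟨hxx', hx'y⟩, hx'⟩ := exists_mem_Ioo_map_lt hD hu hxy hlt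
  obtain ⟨z', hz'D, ⟨hz'z, hyz'⟩, hz'⟩ := exists_mem_Ioo_map_lt (Y := Yᵒᵈ) hD hu hyz hzy
  exact (hM.le_of_lt_of_eventually_Icc_subset hF hh hFh hx'y hyz'
    (ha x' hx'D z' hz'D ((Icc_subset_Icc hxx'.le hz'z.le).trans hxz)) hx').not_gt hz'

end IsMinimalSet

end NoPeaks

section IntervalEnds

variable {Y Z : Type*}

/-- The endpoints of the order-connected components of `S`, encoded as the points of `S` which do
not lie strictly inside a closed interval contained in `S`. -/
def intervalEnds [Preorder Y] (S : Set Y) : Set Y :=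
  {t ∈ S | ∀ r s, r < t → t < s → ¬ Icc r s ⊆ S}

theorem mem_intervalEnds_of_isGreatest [Preorder Y] {S : Set Y} {t : Y} (ht : IsGreatest S t) :
    t ∈ intervalEnds S :=
  ⟨ht.1, fun _ _ hr hs hrs => hs.not_ge (ht.2 (hrs (right_mem_Icc.2 (hr.trans hs).le)))⟩

/-- The function `u` is increasing or decreasing on each closed interval contained in `S`; the
direction may depend on the interval. -/
def MonotoneOnIntervals [Preorder Y] [Preorder Z] (u : Y → Z) (S : Set Y) : Prop :=
  ∀ p q, Icc p q ⊆ S → MonotoneOn u (Icc p q) ∨ AntitoneOn u (Icc p q)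

variable [ConditionallyCompleteLinearOrder Y] [TopologicalSpace Y] [OrderTopology Y] {S : Set Y}
  {x r : Y}

theorem exists_mem_intervalEnds_lt (hS : IsCompact S) (hrx : r < x) (hr : Icc r x ⊆ S) :
    ∃ p ∈ intervalEnds S, p < x ∧ Icc p x ⊆ S := by
  let T : Set Y := {y | y ≤ x ∧ Icc y x ⊆ S}
  have hrT : r ∈ T := ⟨hrx.le, hr⟩
  have hTS : T ⊆ S := fun y hy => hy.2 (left_mem_Icc.2 hy.1)
  have : Nonempty Y := ⟨x⟩
  have hT : BddBelow T := hS.bddBelow.mono hTS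
  have hle : sInf T ≤ r := csInf_le hT hrT
  have hpS : sInf T ∈ S := closure_minimal hTS hS.isClosed (csInf_mem_closure ⟨r, hrT⟩ hT)
  have hIcc : Icc (sInf T) x ⊆ S := by
    intro t ht
    rcases ht.1.eq_or_lt with rfl | h
    · exact hpS
    · obtain ⟨y, hy, hyt⟩ := exists_lt_of_csInf_lt ⟨r, hrT⟩ h
      exact hy.2 ⟨hyt.le, ht.2⟩
  refine ⟨sInf T, ⟨hpS, fun a b ha hb hab => ?_⟩, hle.trans_lt hrx, hIcc⟩
  have haT : a ∈ T := by
    refine ⟨(ha.trans_le (hle.trans hrx.le)).le, fun t ht => ?_⟩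
    rcases le_total t (sInf T) with h | h
    · exact hab ⟨ht.1, h.trans hb.le⟩
    · exact hIcc ⟨h, ht.2⟩
  exact ha.not_ge (csInf_le hT haT)

theorem exists_mem_intervalEnds_gt (hS : IsCompact S) (hxr : x < r) (hr : Icc x r ⊆ S) :
    ∃ q ∈ intervalEnds S, x < q ∧ Icc x q ⊆ S := by
  obtain ⟨q, ⟨hq, hq'⟩, hxq, hI⟩ := exists_mem_intervalEnds_lt (Y := Yᵒᵈ) (S := S) hS
    (x := x) (r := r) hxr fun t ht => hr ⟨ht.2, ht.1⟩
  exact ⟨q, ⟨hq, fun a b ha hb hab => hq' b a hb ha fun t ht => hab ⟨ht.2, ht.1⟩⟩, hxq,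
    fun t ht => hI ⟨ht.2, ht.1⟩⟩

theorem exists_intervalEnds_mem_Ioo (hS : IsCompact S) (hx : x ∈ S) (hxE : x ∉ intervalEnds S) :
    ∃ p ∈ intervalEnds S, ∃ q ∈ intervalEnds S, x ∈ Ioo p q ∧ Icc p q ⊆ S := by
  obtain ⟨r, s, hrx, hxs, hrs⟩ : ∃ r s, r < x ∧ x < s ∧ Icc r s ⊆ S := by
    by_contra! h
    exact hxE ⟨hx, h⟩
  obtain ⟨p, hpE, hpx, hp⟩ :=
    exists_mem_intervalEnds_lt hS hrx ((Icc_subset_Icc_right hxs.le).trans hrs)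
  obtain ⟨q, hqE, hxq, hq⟩ :=
    exists_mem_intervalEnds_gt hS hxs ((Icc_subset_Icc_left hrx.le).trans hrs)
  refine ⟨p, hpE, q, hqE, ⟨hpx, hxq⟩, ?_⟩
  rw [← Icc_union_Icc_eq_Icc hpx.le hxq.le]
  exact union_subset hp hq

theorem MonotoneOnIntervals.exists_mem_intervalEnds_map_eq [DenselyOrdered Y]
    [LinearOrder Z] [TopologicalSpace Z] [OrderClosedTopology Z] {u : Y → Z} {S' : Set Z}
    (hmono : MonotoneOnIntervals u S) (hu : Continuous u) (hS : IsCompact S)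
    (hmaps : MapsTo u S S') (hx : x ∈ S) (hux : u x ∈ intervalEnds S') :
    ∃ e ∈ intervalEnds S, u e = u x := by
  by_cases hxE : x ∈ intervalEnds S
  · exact ⟨x, hxE, rfl⟩
  obtain ⟨p, hpE, q, hqE, ⟨hpx, hxq⟩, hpq⟩ := exists_intervalEnds_mem_Ioo hS hx hxE
  have hle : p ≤ q := (hpx.trans hxq).le
  have hpmem : p ∈ Icc p q := left_mem_Icc.2 hle
  have hxmem : x ∈ Icc p q := ⟨hpx.le, hxq.le⟩
  have hqmem : q ∈ Icc p q := right_mem_Icc.2 hle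
  have himage : u '' Icc p q ⊆ S' := (hmaps.mono_left hpq).image_subset
  by_contra! hne
  rcases hmono p q hpq with hm | hm
  · exact hux.2 _ _ ((hm hpmem hxmem hpx.le).lt_of_ne (hne p hpE))
      ((hm hxmem hqmem hxq.le).lt_of_ne (hne q hqE).symm)
      ((intermediate_value_Icc hle hu.continuousOn).trans himage)
  · exact hux.2 _ _ ((hm hxmem hqmem hxq.le).lt_of_ne (hne q hqE))
      ((hm hpmem hxmem hpx.le).lt_of_ne (hne p hpE).symm)
      ((intermediate_value_Icc' hle hu.continuousOn).trans himage)

end IntervalEnds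

section FibreEnds

variable {B Y : Type*}

/-- The endpoints of the components of all fibres of `M`. -/
def fibreEnds [Preorder Y] (M : Set (B × Y)) : Set (B × Y) :=
  {p | p.2 ∈ intervalEnds (Prod.mk p.1 ⁻¹' M)}

theorem fibreEnds_subset [Preorder Y] (M : Set (B × Y)) : fibreEnds M ⊆ M := fun _ hp => hp.1

theorem interior_eq_empty_of_subset_closure_fibreEnds [LinearOrder Y] [DenselyOrdered Y]
    [Nontrivial Y] [TopologicalSpace Y] [OrderTopology Y] [TopologicalSpace B]
    {M : Set (B × Y)} (h : M ⊆ closure (fibreEnds M)) : interior M = ∅ := by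
  by_contra! hne
  obtain ⟨⟨b, t⟩, hbt⟩ := hne
  obtain ⟨U, V, hU, hV, hbU, htV, hUV⟩ := isOpen_prod_iff.1 isOpen_interior b t hbt
  replace hUV : U ×ˢ V ⊆ M := hUV.trans interior_subset
  obtain ⟨l, r, hlr, hlrV⟩ := hV.exists_Ioo_subset ⟨t, htV⟩
  obtain ⟨s, hs⟩ := exists_between hlr
  have hsM : (b, s) ∈ M := hUV ⟨hbU, hlrV hs⟩
  obtain ⟨⟨c, e⟩, ⟨hcU, hle, her⟩, hce⟩ :=
    mem_closure_iff.1 (h hsM) (U ×ˢ Ioo l r) (hU.prod isOpen_Ioo) ⟨hbU, hs⟩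
  obtain ⟨v, hlv, hve⟩ := exists_between hle
  obtain ⟨w, hew, hwr⟩ := exists_between her
  exact hce.2 v w hve hew fun t ht =>
    hUV ⟨hcU, hlrV ⟨hlv.trans_le ht.1, ht.2.trans_lt hwr⟩⟩

end FibreEnds

section SkewProduct

variable {B Y : Type*} [TopologicalSpace B] [TopologicalSpace Y]

theorem isCompact_preimage_prodMk [T2Space B] [T2Space Y] {M : Set (B × Y)} (hM : IsCompact M)
    (b : B) : IsCompact (Prod.mk b ⁻¹' M) :=
  (hM.image continuous_snd).of_isClosed_subset (hM.isClosed.preimage (by fun_prop))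
    fun t ht => ⟨(b, t), ht, rfl⟩

theorem continuous_of_semiconj_fst [Nonempty Y] {f : B → B} {F : B × Y → B × Y}
    (hF : Continuous F) (hFf : Semiconj Prod.fst F f) : Continuous f := by
  obtain ⟨y⟩ := ‹Nonempty Y›
  have hf : f = fun b => (F (b, y)).1 := funext fun b => (hFf (b, y)).symm
  rw [hf]
  fun_prop

namespace IsMinimalSet

variable [T2Space B] [ConditionallyCompleteLinearOrder Y] [DenselyOrdered Y] [OrderTopology Y]
  {f : B → B} {F : B × Y → B × Y} {M : Set (B × Y)}

theorem eventually_residual_monotoneOnIntervals [SeparableSpace Y] (hM : IsMinimalSet F M)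
    (hF : Continuous F) (hFf : Semiconj Prod.fst F f) :
    ∀ᶠ a in residual B, MonotoneOnIntervals (fun t => (F (a, t)).2) (Prod.mk a ⁻¹' M) := by
  have hfst : ∀ a t t', (F (a, t)).1 = (F (a, t')).1 :=
    fun a t t' => (hFf (a, t)).trans (hFf (a, t')).symm
  have hsnd : Continuous fun p => (F p).2 := by fun_prop
  obtain ⟨D, hDc, hD⟩ := exists_countable_dense Y
  filter_upwards [eventually_residual_eventually_Icc_subset hM.isCompact.isClosed hDc]
    with a ha p q hpq
  by_contra! hcon
  obtain ⟨x, hx, y, -, z, hz, hxy, hyz, hextremum⟩ :=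
    not_monotoneOn_not_antitoneOn_iff_exists_lt_lt.1 hcon
  have hxz : Icc x z ⊆ Prod.mk a ⁻¹' M := (Icc_subset_Icc hx.1 hz.2).trans hpq
  rcases hextremum with hpeak | hvalley
  · exact (hM.le_of_lt_of_Icc_subset hF hsnd (fun b t t' h => Prod.ext (hfst b t t') h)
      hD ha hxy hyz hxz hpeak.1).not_gt hpeak.2
  · exact (hM.le_of_lt_of_Icc_subset hF (continuous_toDual.comp hsnd)
      (fun b t t' h => Prod.ext (hfst b t t') (OrderDual.toDual.injective h))
      hD ha hxy hyz hxz hvalley.1).not_gt hvalley.2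

theorem mem_image_fibreEnds (hM : IsMinimalSet F M) (hF : Continuous F)
    (hFf : Semiconj Prod.fst F f) {p : B × Y} (hp : p ∈ fibreEnds M)
    (hmono : ∀ a, f a = p.1 → MonotoneOnIntervals (fun t => (F (a, t)).2) (Prod.mk a ⁻¹' M)) :
    p ∈ F '' fibreEnds M := by
  obtain ⟨⟨a, x⟩, hax, rfl⟩ := hM.subset_image hF (fibreEnds_subset M hp)
  have hfst : ∀ t, (F (a, t)).1 = (F (a, x)).1 := fun t => (hFf (a, t)).trans (hFf (a, x)).symm
  have hmaps : MapsTo (fun t => (F (a, t)).2) (Prod.mk a ⁻¹' M)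
      (Prod.mk (F (a, x)).1 ⁻¹' M) := by
    intro t ht
    rw [mem_preimage, ← hfst t]
    exact hM.mapsTo ht
  obtain ⟨e, he, hFe⟩ := (hmono a (hFf (a, x)).symm).exists_mem_intervalEnds_map_eq
    (by fun_prop) (isCompact_preimage_prodMk hM.isCompact a) hmaps hax hp
  exact ⟨(a, e), he, Prod.ext (hfst e) hFe⟩

theorem interior_eq_empty_of_image_fst_eq_univ [Nontrivial Y] [SeparableSpace Y]
    (hM : IsMinimalSet F M) (hF : Continuous F) (hFf : Semiconj Prod.fst F f)
    (hMB : Prod.fst '' M = univ) : interior M = ∅ := by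
  have hbase : IsMinimalSet f univ := hMB ▸ hM.image continuous_fst hFf
  have : CompactSpace B := ⟨hbase.isCompact⟩
  obtain ⟨T, hT, hTmono, hTf⟩ := hbase.exists_residual_subset_preimage_subset
    (continuous_of_semiconj_fst hF hFf) (hM.eventually_residual_monotoneOnIntervals hF hFf)
  let E : Set (B × Y) := fibreEnds M ∩ Prod.fst ⁻¹' T
  have hEM : E ⊆ M := inter_subset_left.trans (fibreEnds_subset M)
  have hE : E.Nonempty := by
    have : Nonempty B := hM.nonempty.to_type.map Prod.fst
    obtain ⟨b, hb⟩ := (dense_of_mem_residual hT).nonempty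
    obtain ⟨⟨b, t⟩, ht, rfl⟩ : b ∈ Prod.fst '' M := hMB ▸ mem_univ b
    obtain ⟨e, he⟩ := (isCompact_preimage_prodMk hM.isCompact b).exists_isGreatest ⟨t, ht⟩
    exact ⟨(b, e), mem_intervalEnds_of_isGreatest he, hb⟩
  have hEF : E ⊆ F '' E := by
    rintro p ⟨hp, hpT⟩
    have hback : ∀ a, f a = p.1 → a ∈ T := fun a ha => hTf (by rwa [mem_preimage, ha])
    obtain ⟨q, hq, rfl⟩ := hM.mem_image_fibreEnds hF hFf hp fun a ha => hTmono (hback a ha)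
    exact ⟨q, ⟨hq, hback q.1 (hFf q).symm⟩, rfl⟩
  exact interior_eq_empty_of_subset_closure_fibreEnds <|
    (hM.subset_closure_of_subset_image hF hEM hE hEF).trans (closure_mono inter_subset_left)

end IsMinimalSet

end SkewProduct

theorem minimal_set_of_skew_product_on_interval_nowhere_dense_general {B Y : Type*}
    [TopologicalSpace B] [T2Space B] [ConditionallyCompleteLinearOrder Y] [DenselyOrdered Y]
    [Nontrivial Y] [TopologicalSpace Y] [OrderTopology Y] [SeparableSpace Y]
    {f : B → B} {F : B × Y → B × Y} (hF : Continuous F) (hFf : Semiconj Prod.fst F f)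
    {M : Set (B × Y)} (hM : IsMinimalSet F M) : IsNowhereDense M := by
  let K : Set B := Prod.fst '' M
  let j : K × Y → B × Y := Prod.map Subtype.val id
  have hj : IsInducing j := IsInducing.subtypeVal.prodMap IsInducing.id
  have hMj : M ⊆ range j := fun p hp => ⟨(⟨p.1, mem_image_of_mem _ hp⟩, p.2), rfl⟩
  have hK : MapsTo f K K := (hM.image continuous_fst hFf).mapsTo
  let F' : K × Y → K × Y := fun p => (hK.restrict f K K p.1, (F (j p)).2)
  have hF' : Continuous F' :=
    (((continuous_of_semiconj_fst hF hFf).restrict hK).comp continuous_fst).prodMk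
      (hF.comp hj.continuous).snd
  have hMK : IsMinimalSet F' (j ⁻¹' M) :=
    hM.preimage hj (fun p => Prod.ext (hFf (j p)).symm rfl) hMj
  have hsurj : Prod.fst '' (j ⁻¹' M) = univ := by
    refine eq_univ_of_forall ?_
    rintro ⟨_, p, hp, rfl⟩
    exact ⟨(⟨p.1, mem_image_of_mem _ hp⟩, p.2), hp, rfl⟩
  have hempty : interior (j ⁻¹' M) = ∅ :=
    hMK.interior_eq_empty_of_image_fst_eq_univ hF' (f := hK.restrict f K K) (fun _ => rfl) hsurj
  refine hM.isCompact.isClosed.isNowhereDense_iff.2 <| eq_empty_of_forall_notMem fun p hp => ?_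
  obtain ⟨q, rfl⟩ := hMj (interior_subset hp)
  exact hempty.subset (preimage_interior_subset_interior_preimage hj.continuous hp)

/-- Every minimal set of a fibre-preserving (skew product) continuous map
of `B × [0,1]` over a minimal base is nowhere dense in `B × [0,1]`. -/
theorem minimal_set_of_skew_product_on_interval_nowhere_dense
    {B : Type*} [MetricSpace B] [CompactSpace B] [Nonempty B]
    (f : B → B) (hf : Continuous f)
    (hfmin : ∀ b : B, Dense (Set.range fun n => f^[n] b))
    (g : B × I → I) (hg : Continuous g)
    (F : B × I → B × I) (hF : ∀ p, F p = (f p.1, g p))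
    (M : Set (B × I)) (hMne : M.Nonempty) (hMcl : IsClosed M)
    (hMinv : Set.MapsTo F M M)
    (hMmin : ∀ p ∈ M, M ⊆ closure (Set.range fun n => F^[n] p)) :
    IsNowhereDense M :=
  minimal_set_of_skew_product_on_interval_nowhere_dense_general
    (by rw [funext hF]; fun_prop) (fun p => by rw [hF]) ⟨hMne, hMcl.isCompact, hMinv, hMmin⟩
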